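/- Let Δ = (δ_1,…,δ_d) ∈ ℤ^d be a primitive vector (the gcd of its coordinates is 1) such that δ_i·δ_j < 0 for some indices i, j, and let E ⊆ ℕ^d be a finite subset. Then there exists a unique subset D ⊆ ℕ^d satisfying: (i) for every p ∈ ℕ^d, the sets D ∩ L_p and E ∩ L_p are equipotent, where L_p = {p + tΔ : t ∈ ℤ} ∩ ℕ^d; and (ii) for all i ∈ ℕ and n ∈ D, if n + iΔ ∈ ℕ^d then n + iΔ ∈ D. -/

import Mathlib

/-!
Fix a coordinate `j` with `Δ j > 0`. On each line `L` with direction `Δ` the height `q ↦ q j` is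
injective, and moving forward along `Δ` is the same as increasing the height. Since `Δ` also has a
negative coordinate, `L ∩ ℕ^d` is finite. So condition (ii) says that `D ∩ L` is an upper subset of
a finite chain, condition (i) prescribes its cardinality `n`, and a finite chain with at least `n`
elements has exactly one upper subset with `n` elements, namely the elements having fewer than `n`
elements above them (`mem_upper_iff`, `exists_upper`).
-/

/-- Componentwise coercion `ℕ^d → ℤ^d`. -/
def toInt {d : ℕ} (p : Fin d → ℕ) : Fin d → ℤ := fun i => (p i : ℤ)

/-- A staircase in `ℕ^d`: a subset whose complement is stable under addition
(equivalently, a downward closed subset). -/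
def IsStaircase {d : ℕ} (E : Set (Fin d → ℕ)) : Prop :=
  ∀ x, x ∉ E → ∀ y : Fin d → ℕ, x + y ∉ E

/-- The regular staircase `R_μ = {α ∈ ℕ^d : α₁ + ⋯ + α_d < μ}`. -/
def regStaircase (d μ : ℕ) : Set (Fin d → ℕ) := {α | ∑ i, α i < μ}

/-- The scaled staircase `(a₁,…,a_d)·E = {m ∈ ℕ^d : (⌊m₁/a₁⌋,…,⌊m_d/a_d⌋) ∈ E}`. -/
def scaleSet {d : ℕ} (a : Fin d → ℕ) (E : Set (Fin d → ℕ)) : Set (Fin d → ℕ) :=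
  {m | (fun i => m i / a i) ∈ E}

/-- The points of `ℕ^d` on the line through `p` with direction `Δ`. -/
def lineThrough {d : ℕ} (Δ : Fin d → ℤ) (p : Fin d → ℕ) : Set (Fin d → ℕ) :=
  {q | ∃ t : ℤ, toInt q = toInt p + t • Δ}

/-- The specialization `Δ(E)` of a (finite) subset `E ⊆ ℕ^d` along the direction `Δ`:
`p ∈ Δ(E)` iff the number of integers `i > 0` with `p + iΔ ∈ ℕ^d` is strictly smaller
than `#(E ∩ L_p)`, where `L_p` is the line through `p` with direction `Δ`.  Equivalently,
on each line `L` with direction `Δ`, `Δ(E) ∩ L` consists of the `#(E ∩ L)` largest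
elements of `L ∩ ℕ^d` for the order `m < m'` iff `m' = m + iΔ`, `i > 0`. -/
def deltaOf {d : ℕ} (Δ : Fin d → ℤ) (E : Set (Fin d → ℕ)) : Set (Fin d → ℕ) :=
  {p | Set.ncard {i : ℕ | 0 < i ∧ ∃ q : Fin d → ℕ, toInt q = toInt p + (i : ℤ) • Δ}
        < Set.ncard (E ∩ lineThrough Δ p)}

/-- `Δ ∈ ℤ^d` is admissible if some coordinate equals `1`, all the others are `≤ 0`,
and at least one coordinate besides the `1` is nonzero. -/
def IsAdmissible {d : ℕ} (Δ : Fin d → ℤ) : Prop :=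
  ∃ i, Δ i = 1 ∧ (∀ k, k ≠ i → Δ k ≤ 0) ∧ ∃ j, j ≠ i ∧ Δ j ≠ 0

/-- In a finite set ordered by an injective height `f`, an upper subset `T` consists of the elements
having fewer than `T.ncard` elements above them. -/
lemma mem_upper_iff {α : Type*} {S T : Set α} {f : α → ℕ} (hS : S.Finite) (hf : Set.InjOn f S)
    (hT : T ⊆ S) (hup : ∀ x ∈ T, ∀ y ∈ S, f x < f y → y ∈ T) {x : α} (hx : x ∈ S) :
    x ∈ T ↔ {y ∈ S | f x < f y}.ncard < T.ncard := by
  constructor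
  · intro hxT
    apply Set.ncard_lt_ncard _ (hS.subset hT)
    refine ⟨fun y hy => hup x hxT y hy.1 hy.2, fun h => ?_⟩
    exact lt_irrefl _ (h hxT).2
  · intro h
    by_contra hxT
    refine absurd h (not_lt.2 (Set.ncard_le_ncard ?_ (hS.subset (Set.sep_subset _ _))))
    intro y hy
    refine ⟨hT hy, ?_⟩
    by_contra hlt
    rcases (not_lt.1 hlt).lt_or_eq with h1 | h1
    · exact hxT (hup y hy x hx h1)
    · exact hxT (hf (hT hy) hx h1 ▸ hy)

lemma exists_upper {α : Type*} {S : Set α} {f : α → ℕ} (hS : S.Finite)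
    (n : ℕ) (hn : n ≤ S.ncard) :
    ∃ T ⊆ S, (∀ x ∈ T, ∀ y ∈ S, f x < f y → y ∈ T) ∧ T.ncard = n := by
  induction n with
  | zero => exact ⟨∅, by simp, by simp, by simp⟩
  | succ n ih =>
    obtain ⟨T, hT, hup, hc⟩ := ih (by omega)
    have hne : (S \ T).Nonempty := by
      apply Set.sdiff_nonempty_of_ncard_lt_ncard _ (hS.subset hT)
      omega
    -- The next element to add is the highest one not yet in `T`.
    obtain ⟨m, hm, hmax⟩ := Set.exists_max_image (S \ T) f (hS.subset Set.sdiff_subset) hne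
    refine ⟨insert m T, Set.insert_subset hm.1 hT, ?_, ?_⟩
    · rintro x (rfl | hx) y hy hxy
      · by_contra hyT
        have := hmax y ⟨hy, fun h => hyT (Or.inr h)⟩
        omega
      · exact Or.inr (hup x hx y hy hxy)
    · rw [Set.ncard_insert_of_notMem hm.2 (hS.subset hT), hc]

lemma toInt_injective {d : ℕ} : Function.Injective (toInt : (Fin d → ℕ) → Fin d → ℤ) := by
  intro p q h
  funext i
  have := congrFun h i
  simpa [toInt] using this

lemma toInt_eq_apply {d : ℕ} {Δ : Fin d → ℤ} {p q : Fin d → ℕ} {t : ℤ}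
    (h : toInt q = toInt p + t • Δ) (i : Fin d) : (q i : ℤ) = p i + t * Δ i := by
  simpa [toInt] using congrFun h i

lemma mem_lineThrough_self {d : ℕ} (Δ : Fin d → ℤ) (p : Fin d → ℕ) : p ∈ lineThrough Δ p :=
  ⟨0, by simp⟩

lemma lineThrough_eq {d : ℕ} {Δ : Fin d → ℤ} {p q : Fin d → ℕ} (h : q ∈ lineThrough Δ p) :
    lineThrough Δ q = lineThrough Δ p := by
  obtain ⟨t, ht⟩ := h
  ext r
  constructor
  · rintro ⟨s, hs⟩
    exact ⟨t + s, by rw [hs, ht, add_smul, add_assoc]⟩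
  · rintro ⟨s, hs⟩
    exact ⟨s - t, by rw [hs, ht, sub_smul]; abel⟩

lemma lineThrough_finite {d : ℕ} {Δ : Fin d → ℤ} {j k : Fin d} (hj : 0 < Δ j) (hk : Δ k < 0)
    (p : Fin d → ℕ) : (lineThrough Δ p).Finite := by
  have hfin : ((fun t : ℤ => toInt p + t • Δ) '' Set.Icc (-(p j : ℤ)) (p k)).Finite :=
    (Set.finite_Icc _ _).image _
  refine (hfin.preimage toInt_injective.injOn).subset ?_
  rintro q ⟨t, ht⟩
  refine ⟨t, ⟨?_, ?_⟩, ht.symm⟩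
  · have := toInt_eq_apply ht j
    by_contra! h
    nlinarith [(q j).cast_nonneg (α := ℤ)]
  · have := toInt_eq_apply ht k
    by_contra! h
    nlinarith [(q k).cast_nonneg (α := ℤ)]

/-- Two points of the same line are separated by the coordinate `j`, which measures the parameter
along `Δ`. -/
lemma height_injOn {d : ℕ} {Δ : Fin d → ℤ} {j : Fin d} (hj : 0 < Δ j) (p : Fin d → ℕ) :
    Set.InjOn (fun q : Fin d → ℕ => q j) (lineThrough Δ p) := by
  rintro q hq r hr (hqr : q j = r j)
  rw [← lineThrough_eq hq] at hr
  obtain ⟨t, ht⟩ := hr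
  have h := toInt_eq_apply ht j
  have h0 : t = 0 := by
    have : t * Δ j = 0 := by rw [hqr] at h; linarith
    exact (mul_eq_zero.1 this).resolve_right hj.ne'
  apply toInt_injective
  simpa [h0] using ht.symm

/-- Stability under nonnegative multiples of `Δ` makes the trace on each line an upper set for the
height `q ↦ q j`. -/
lemma trace_upper {d : ℕ} {Δ : Fin d → ℤ} {j : Fin d} (hj : 0 < Δ j) {D : Set (Fin d → ℕ)}
    (hD : ∀ (i : ℕ) (n : Fin d → ℕ), n ∈ D →
        ∀ q : Fin d → ℕ, toInt q = toInt n + (i : ℤ) • Δ → q ∈ D) (p : Fin d → ℕ) :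
    ∀ x ∈ D ∩ lineThrough Δ p, ∀ y ∈ lineThrough Δ p, x j < y j → y ∈ D ∩ lineThrough Δ p := by
  rintro x ⟨hxD, hx⟩ y hy hxy
  refine ⟨?_, hy⟩
  rw [← lineThrough_eq hx] at hy
  obtain ⟨t, ht⟩ := hy
  have h := toInt_eq_apply ht j
  have h0 : 0 ≤ t := by
    by_contra! h1
    have : (x j : ℤ) < y j := by exact_mod_cast hxy
    nlinarith
  exact hD t.toNat x hxD y (by rwa [Int.toNat_of_nonneg h0])

/-- Existence and uniqueness of the specialization `Δ(E)` (definition 3.4 of the paper):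
for a primitive direction `Δ ∈ ℤ^d` with two coordinates of opposite signs and a finite
subset `E ⊆ ℕ^d`, there is a unique subset `D ⊆ ℕ^d` such that (i) on every line `L_p`
with direction `Δ`, `D ∩ L_p` and `E ∩ L_p` are equipotent, and (ii) `D` is stable under
adding nonnegative multiples of `Δ` (as long as one stays in `ℕ^d`). -/
theorem deltaOf_exists_unique (d : ℕ) (Δ : Fin d → ℤ)
    (hprim : Finset.univ.gcd Δ = 1)
    (hsign : ∃ i j, Δ i * Δ j < 0)
    (E : Set (Fin d → ℕ)) (hE : E.Finite) :
    ∃! D : Set (Fin d → ℕ),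
      (∀ p : Fin d → ℕ, (D ∩ lineThrough Δ p).ncard = (E ∩ lineThrough Δ p).ncard) ∧
      (∀ (i : ℕ) (n : Fin d → ℕ), n ∈ D →
        ∀ q : Fin d → ℕ, toInt q = toInt n + (i : ℤ) • Δ → q ∈ D) := by
  obtain ⟨j, k, hj, hk⟩ : ∃ j k, 0 < Δ j ∧ Δ k < 0 := by
    obtain ⟨a, b, hab⟩ := hsign
    rcases mul_neg_iff.1 hab with h | h
    · exact ⟨a, b, h⟩
    · exact ⟨b, a, h.2, h.1⟩
  have hfin := lineThrough_finite (Δ := Δ) hj hk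
  have hinj := height_injOn (Δ := Δ) hj
  refine ⟨{p | {y ∈ lineThrough Δ p | p j < y j}.ncard < (E ∩ lineThrough Δ p).ncard},
    ⟨fun p => ?_, ?_⟩, ?_⟩
  · obtain ⟨T, hTS, hup, hc⟩ := exists_upper (f := fun q => q j) (hfin p) (E ∩ lineThrough Δ p).ncard
      (Set.ncard_le_ncard Set.inter_subset_right (hfin p))
    rw [← hc]
    congr 1
    ext x
    constructor
    · rintro ⟨hx, hxp⟩
      rw [Set.mem_ofPred_eq, lineThrough_eq hxp, ← hc] at hx
      exact (mem_upper_iff (hfin p) (hinj p) hTS hup hxp).2 hx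
    · intro hx
      have hxp := hTS hx
      refine ⟨?_, hxp⟩
      rw [Set.mem_ofPred_eq, lineThrough_eq hxp, ← hc]
      exact (mem_upper_iff (hfin p) (hinj p) hTS hup hxp).1 hx
  · intro i n hn q hq
    have hL : lineThrough Δ q = lineThrough Δ n := lineThrough_eq ⟨i, hq⟩
    rw [Set.mem_ofPred_eq] at hn ⊢
    rw [hL]
    refine lt_of_le_of_lt (Set.ncard_le_ncard ?_ ((hfin n).subset (Set.sep_subset _ _))) hn
    rintro y ⟨hy, hqy⟩
    refine ⟨hy, lt_of_le_of_lt ?_ hqy⟩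
    have h := toInt_eq_apply hq j
    have : (0 : ℤ) ≤ i * Δ j := by positivity
    omega
  · rintro D ⟨hcard, hstab⟩
    ext x
    have hx := mem_lineThrough_self Δ x
    have h := mem_upper_iff (hfin x) (hinj x) Set.inter_subset_right
      (trace_upper hj hstab x) hx
    rw [hcard] at h
    rw [Set.mem_ofPred_eq, ← h]
    exact ⟨fun hxD => ⟨hxD, hx⟩, fun hxD => hxD.1⟩
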